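/- Let (X,d) be a compact metric space and f: X → ℝ a Lipschitz function. Then the map t ↦ Q_t f is Lipschitz from [0,∞) into C(X) endowed with the sup norm and, for every x ∈ X, the derivative (d/dt) Q_t f(x) exists and equals −[D⁺(x,t)]²/(2t²) = −[D⁻(x,t)]²/(2t²) for every t ∈ (0,∞) with at most countably many exceptions. -/

import Mathlib

open Filter Topology Set MeasureTheory
open scoped ENNReal NNReal

/-- Hopf-Lax semigroup: `Q_t f (x) = inf_y ( f y + d(x,y)^2 / (2t) )`, with `Q_0 f = f`. -/
noncomputable def HL {X : Type*} [MetricSpace X] (f : X → ℝ) (t : ℝ) (x : X) : ℝ :=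
  if t = 0 then f x else ⨅ y : X, (f y + dist x y ^ 2 / (2 * t))

/-- The set of minimizers of `y ↦ f y + d(x,y)^2/(2t)`. -/
def minSet {X : Type*} [MetricSpace X] (f : X → ℝ) (t : ℝ) (x : X) : Set X :=
  {y | ∀ z : X, f y + dist x y ^ 2 / (2 * t) ≤ f z + dist x z ^ 2 / (2 * t)}

/-- `D⁺(x,t)`: the largest distance from `x` to a minimizer of `y ↦ f y + d(x,y)^2/(2t)`,
with `D⁺(x,0) = 0`. -/
noncomputable def Dplus {X : Type*} [MetricSpace X] (f : X → ℝ) (x : X) (t : ℝ) : ℝ :=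
  if t = 0 then 0 else sSup (dist x '' minSet f t x)

/-- `D⁻(x,t)`: the smallest distance from `x` to a minimizer of `y ↦ f y + d(x,y)^2/(2t)`,
with `D⁻(x,0) = 0`. -/
noncomputable def Dminus {X : Type*} [MetricSpace X] (f : X → ℝ) (x : X) (t : ℝ) : ℝ :=
  if t = 0 then 0 else sInf (dist x '' minSet f t x)

section HopfLax

variable {X : Type*} [MetricSpace X] {f : X → ℝ} {s t : ℝ} {x y z : X}

theorem HL_eq_of_mem_minSet (ht : t ≠ 0) (hy : y ∈ minSet f t x) :
    HL f t x = f y + dist x y ^ 2 / (2 * t) := by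
  have : Nonempty X := ⟨y⟩
  rw [HL, if_neg ht]
  exact le_antisymm (ciInf_le ⟨_, forall_mem_range.2 hy⟩ y) (le_ciInf hy)

theorem dist_le_dist_of_mem_minSet (hs : 0 < s) (hst : s < t) (hy : y ∈ minSet f s x)
    (hz : z ∈ minSet f t x) : dist x y ≤ dist x z := by
  have h₁ := hy z
  have h₂ := hz y
  have hu : 1 / (2 * t) < 1 / (2 * s) := one_div_lt_one_div_of_lt (by linarith) (by linarith)
  rw [div_eq_mul_one_div (dist x y ^ 2), div_eq_mul_one_div (dist x z ^ 2)] at h₁ h₂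
  refine le_of_sq_le_sq ?_ dist_nonneg
  by_contra! h
  nlinarith [mul_pos (sub_pos.2 h) (sub_pos.2 hu)]

variable [CompactSpace X]

theorem isCompact_dist_image_minSet (hf : Continuous f) (t : ℝ) (x : X) :
    IsCompact (dist x '' minSet f t x) := by
  have hclosed : IsClosed (minSet f t x) := by
    simp only [minSet, ofPred_forall]
    exact isClosed_iInter fun z => isClosed_le (by fun_prop) continuous_const
  exact hclosed.isCompact.image (by fun_prop)

theorem nonempty_minSet [Nonempty X] (hf : Continuous f) (t : ℝ) (x : X) :
    (minSet f t x).Nonempty := by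
  obtain ⟨y, -, hy⟩ := isCompact_univ.exists_isMinOn univ_nonempty
    (f := fun y => f y + dist x y ^ 2 / (2 * t)) (by fun_prop)
  exact ⟨y, fun z => hy (mem_univ z)⟩

theorem exists_mem_minSet_dist_eq_Dplus [Nonempty X] (hf : Continuous f) (ht : t ≠ 0) (x : X) :
    ∃ y ∈ minSet f t x, dist x y = Dplus f x t := by
  rw [Dplus, if_neg ht]
  exact (isCompact_dist_image_minSet hf t x).sSup_mem ((nonempty_minSet hf t x).image _)

theorem exists_mem_minSet_dist_eq_Dminus [Nonempty X] (hf : Continuous f) (ht : t ≠ 0) (x : X) :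
    ∃ y ∈ minSet f t x, dist x y = Dminus f x t := by
  rw [Dminus, if_neg ht]
  exact (isCompact_dist_image_minSet hf t x).sInf_mem ((nonempty_minSet hf t x).image _)

theorem Dminus_le_Dplus [Nonempty X] (hf : Continuous f) (ht : t ≠ 0) (x : X) :
    Dminus f x t ≤ Dplus f x t := by
  rw [Dminus, Dplus, if_neg ht, if_neg ht]
  exact Real.sInf_le_sSup _ (isCompact_dist_image_minSet hf t x).bddBelow
    (isCompact_dist_image_minSet hf t x).bddAbove

theorem Dplus_le_Dminus_of_lt [Nonempty X] (hf : Continuous f) (hs : 0 < s) (hst : s < t) (x : X) :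
    Dplus f x s ≤ Dminus f x t := by
  obtain ⟨y, hy, hyD⟩ := exists_mem_minSet_dist_eq_Dplus hf hs.ne' x
  obtain ⟨z, hz, hzD⟩ := exists_mem_minSet_dist_eq_Dminus hf (hs.trans hst).ne' x
  rw [← hyD, ← hzD]
  exact dist_le_dist_of_mem_minSet hs hst hy hz

theorem monotone_indicator_Dminus [Nonempty X] (hf : Continuous f) (x : X) :
    Monotone ((Ioi (0 : ℝ)).indicator (Dminus f x)) := by
  intro s t hst
  rcases hst.eq_or_lt with rfl | hlt
  · exact le_rfl
  by_cases hs : 0 < s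
  · rw [indicator_of_mem (mem_Ioi.2 hs), indicator_of_mem (mem_Ioi.2 (hs.trans hlt))]
    exact (Dminus_le_Dplus hf hs.ne' x).trans (Dplus_le_Dminus_of_lt hf hs hlt x)
  · rw [indicator_of_notMem (by simpa using hs)]
    refine indicator_nonneg (fun u hu => ?_) t
    obtain ⟨y, -, hy⟩ := exists_mem_minSet_dist_eq_Dminus hf (ne_of_gt hu) x
    exact hy ▸ dist_nonneg

/-- Testing the minimum at time `s` with a minimizer at time `t`. -/
theorem HL_sub_HL_le [Nonempty X] (hf : Continuous f) (hs : s ≠ 0) (ht : t ≠ 0)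
    (hy : y ∈ minSet f t x) :
    HL f s x - HL f t x ≤ -(dist x y ^ 2 / (2 * s * t)) * (s - t) := by
  obtain ⟨z, hz⟩ := nonempty_minSet hf s x
  rw [HL_eq_of_mem_minSet hs hz, HL_eq_of_mem_minSet ht hy]
  have h := hz y
  have e : -(dist x y ^ 2 / (2 * s * t)) * (s - t)
      = dist x y ^ 2 / (2 * s) - dist x y ^ 2 / (2 * t) := by
    field_simp
    ring
  linarith

theorem slope_HL_mem_uIcc [Nonempty X] (hf : Continuous f) (hs : s ≠ 0) (ht : t ≠ 0) (hst : s ≠ t)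
    (hz : z ∈ minSet f s x) (hy : y ∈ minSet f t x) :
    slope (fun τ => HL f τ x) t s ∈
      uIcc (-(dist x z ^ 2 / (2 * s * t))) (-(dist x y ^ 2 / (2 * s * t))) := by
  have h₁ := HL_sub_HL_le hf hs ht hy
  have h₂ := HL_sub_HL_le hf ht hs hz
  rw [mul_right_comm 2 t s] at h₂
  rw [slope_def_field, mem_uIcc]
  rcases hst.lt_or_gt with h | h
  · right
    rw [le_div_iff_of_neg (sub_neg.2 h), div_le_iff_of_neg (sub_neg.2 h)]
    constructor <;> linarith
  · left
    rw [le_div_iff₀ (sub_pos.2 h), div_le_iff₀ (sub_pos.2 h)]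
    constructor <;> linarith

theorem Dplus_eq_Dminus_of_continuousAt [Nonempty X] (hf : Continuous f) (ht : 0 < t)
    (hc : ContinuousAt (Dminus f x) t) : Dplus f x t = Dminus f x t := by
  refine le_antisymm ?_ (Dminus_le_Dplus hf ht.ne' x)
  refine ge_of_tendsto (hc.tendsto.mono_left (nhdsWithin_le_nhds (s := Ioi t))) ?_
  filter_upwards [self_mem_nhdsWithin] with s hs
  exact Dplus_le_Dminus_of_lt hf ht hs x

theorem hasDerivAt_HL [Nonempty X] (hf : Continuous f) (ht : 0 < t)
    (hc : ContinuousAt (Dminus f x) t) :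
    HasDerivAt (fun τ => HL f τ x) (-(Dminus f x t) ^ 2 / (2 * t ^ 2)) t := by
  rw [hasDerivAt_iff_tendsto_slope]
  have ha : Tendsto (fun s => -(Dminus f x s ^ 2 / (2 * s * t))) (𝓝[≠] t)
      (𝓝 (-(Dminus f x t) ^ 2 / (2 * t ^ 2))) := by
    have : ContinuousAt (fun s => -(Dminus f x s ^ 2 / (2 * s * t))) t := by
      have : 2 * t * t ≠ 0 := by positivity
      fun_prop (disch := assumption)
    convert this.tendsto.mono_left nhdsWithin_le_nhds using 2
    ring
  have hb : Tendsto (fun s => -(Dminus f x t ^ 2 / (2 * s * t))) (𝓝[≠] t)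
      (𝓝 (-(Dminus f x t) ^ 2 / (2 * t ^ 2))) := by
    have : ContinuousAt (fun s => -(Dminus f x t ^ 2 / (2 * s * t))) t := by
      have : 2 * t * t ≠ 0 := by positivity
      fun_prop (disch := assumption)
    convert this.tendsto.mono_left nhdsWithin_le_nhds using 2
    ring
  have hmem : ∀ᶠ s in 𝓝[≠] t, slope (fun τ => HL f τ x) t s ∈
      uIcc (-(Dminus f x s ^ 2 / (2 * s * t))) (-(Dminus f x t ^ 2 / (2 * s * t))) := by
    filter_upwards [self_mem_nhdsWithin, nhdsWithin_le_nhds (Ioi_mem_nhds ht)] with s hst hs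
    obtain ⟨y, hy, hyD⟩ := exists_mem_minSet_dist_eq_Dminus hf ht.ne' x
    obtain ⟨z, hz, hzD⟩ := exists_mem_minSet_dist_eq_Dminus hf (ne_of_gt hs) x
    rw [← hyD, ← hzD]
    exact slope_HL_mem_uIcc hf (ne_of_gt hs) ht.ne' hst hz hy
  have hmin := ha.min hb
  have hmax := ha.max hb
  rw [min_self] at hmin
  rw [max_self] at hmax
  exact tendsto_of_tendsto_of_tendsto_of_le_of_le' hmin hmax
    (hmem.mono fun _ h => h.1) (hmem.mono fun _ h => h.2)

theorem HL_le_self [Nonempty X] (hf : Continuous f) (t : ℝ) (x : X) : HL f t x ≤ f x := by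
  by_cases ht : t = 0
  · simp [HL, ht]
  · obtain ⟨z, hz⟩ := nonempty_minSet hf t x
    rw [HL_eq_of_mem_minSet ht hz]
    simpa using hz x

theorem HL_antitone [Nonempty X] (hf : Continuous f) (hs : 0 ≤ s) (hst : s ≤ t) (x : X) :
    HL f t x ≤ HL f s x := by
  rcases hs.eq_or_lt with rfl | hs
  · simpa [HL] using HL_le_self hf t x
  · obtain ⟨z, hz⟩ := nonempty_minSet hf s x
    have h := HL_sub_HL_le hf (hs.trans_le hst).ne' hs.ne' hz
    have : 0 ≤ dist x z ^ 2 / (2 * t * s) := by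
      have := hs.trans_le hst
      positivity
    nlinarith [mul_nonneg this (sub_nonneg.2 hst)]

theorem HL_le_HL_add [Nonempty X] {K : ℝ≥0} (hf : LipschitzWith K f) (hs : 0 ≤ s) (hst : s ≤ t)
    (x : X) : HL f s x ≤ HL f t x + 4 * K ^ 2 * (t - s) := by
  rcases hst.eq_or_lt with rfl | hlt
  · simp
  have ht : 0 < t := hs.trans_lt hlt
  obtain ⟨y, hy⟩ := nonempty_minSet hf.continuous t x
  have hfy : f x - f y ≤ K * dist x y := (le_abs_self _).trans (hf.dist_le_mul x y)
  have hHL := HL_eq_of_mem_minSet ht.ne' hy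
  rcases lt_or_ge (2 * s) t with h | h
  · have hdiv : K * dist x y - dist x y ^ 2 / (2 * t) ≤ K ^ 2 * t / 2 := by
      have e : K ^ 2 * t / 2 - (K * dist x y - dist x y ^ 2 / (2 * t))
          = (dist x y - K * t) ^ 2 / (2 * t) := by
        field_simp
        ring
      have : 0 ≤ (dist x y - K * t) ^ 2 / (2 * t) := by positivity
      linarith
    nlinarith [HL_le_self hf.continuous s x, mul_nonneg (sq_nonneg (K : ℝ)) (sub_nonneg.2 h.le),
      mul_nonneg (sq_nonneg (K : ℝ)) ht.le]
  · have hs' : 0 < s := by linarith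
    have hd : dist x y ≤ 2 * K * t := by
      have hx := hy x
      rw [dist_self] at hx
      have hle : dist x y ^ 2 / (2 * t) ≤ K * dist x y := by
        simp only [ne_eq, OfNat.ofNat_ne_zero, not_false_eq_true, zero_pow, zero_div] at hx
        linarith
      rw [div_le_iff₀ (by positivity)] at hle
      rcases (dist_nonneg (x := x) (y := y)).eq_or_lt with h0 | h0
      · rw [← h0]
        positivity
      · nlinarith
    have hbound : dist x y ^ 2 / (2 * s * t) ≤ 4 * K ^ 2 := by
      rw [div_le_iff₀ (by positivity)]
      have h₁ : dist x y ^ 2 ≤ (2 * K * t) ^ 2 := pow_le_pow_left₀ dist_nonneg hd 2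
      have h₂ : 0 ≤ (K : ℝ) ^ 2 * t * (2 * s - t) :=
        mul_nonneg (by positivity) (sub_nonneg.2 h)
      nlinarith
    have h₁ := HL_sub_HL_le hf.continuous hs'.ne' ht.ne' hy
    nlinarith [mul_le_mul_of_nonneg_right hbound (sub_nonneg.2 hst)]

end HopfLax

/-- **Time derivative of `Q_t f`** (Proposition 3.3): the map `t ↦ Q_t f` is Lipschitz from
`[0,∞)` to `C(X)` with the sup norm, and for every `x` the derivative
`(d/dt) Q_t f (x) = -[D⁺(x,t)]²/(2t²) = -[D⁻(x,t)]²/(2t²)` exists for all `t ∈ (0,∞)` with at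
most countably many exceptions. -/
theorem stmt2 {X : Type*} [MetricSpace X] [CompactSpace X] [Nonempty X]
    (f : X → ℝ) (hf : ∃ K : ℝ≥0, LipschitzWith K f) :
    (∃ L : ℝ, 0 ≤ L ∧ ∀ t ∈ Ici (0 : ℝ), ∀ s ∈ Ici (0 : ℝ), ∀ x : X,
        |HL f s x - HL f t x| ≤ L * |s - t|) ∧
    (∀ x : X, ∃ E : Set ℝ, E.Countable ∧ ∀ t ∈ Ioi (0 : ℝ), t ∉ E →
        Dplus f x t = Dminus f x t ∧
        HasDerivAt (fun τ : ℝ => HL f τ x) (-(Dplus f x t) ^ 2 / (2 * t ^ 2)) t) := by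
  obtain ⟨K, hK⟩ := hf
  have hc := hK.continuous
  refine ⟨⟨4 * K ^ 2, by positivity, fun t ht s hs x => ?_⟩, fun x => ?_⟩
  · rcases le_total s t with h | h
    · rw [abs_of_nonneg (sub_nonneg.2 (HL_antitone hc hs h x)), abs_sub_comm,
        abs_of_nonneg (sub_nonneg.2 h)]
      linarith [HL_le_HL_add hK hs h x]
    · rw [abs_sub_comm, abs_of_nonneg (sub_nonneg.2 (HL_antitone hc ht h x)),
        abs_of_nonneg (sub_nonneg.2 h)]
      linarith [HL_le_HL_add hK ht h x]
  · refine ⟨_, (monotone_indicator_Dminus hc x).countable_not_continuousAt, fun t ht hE => ?_⟩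
    have hcont : ContinuousAt (Dminus f x) t :=
      (not_not.1 hE).congr <|
        (eqOn_indicator (f := Dminus f x)).eventuallyEq_of_mem (Ioi_mem_nhds ht)
    have heq := Dplus_eq_Dminus_of_continuousAt hc ht hcont
    exact ⟨heq, heq ▸ hasDerivAt_HL hc ht hcont⟩
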